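/- (Proposition 6.) Let μ and ν be random Borel probability measures on the cube [0,1]^d (defined on some probability space) such that E( |f_μ(πm) − f_ν(πm)|² ) ≤ δ² for all m ∈ ℤ^d, where 0 < δ ≤ 2 and f_μ(ξ) = ∫ e^{i⟨ξ,x⟩} dμ(x) is the characteristic function of μ. Then E(W₁(μ,ν)) ≤ δ if d = 1; E(W₁(μ,ν)) ≤ 5δ·√(1 + log(4/δ²)) if d = 2; and E(W₁(μ,ν)) ≤ 10√d · δ^{2/d} if d ≥ 3. -/

import Mathlib

open MeasureTheory Real ENNReal

noncomputable section

/-- Euclidean distance on `Fin d → ℝ`. -/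
def euclidDist {d : ℕ} (x y : Fin d → ℝ) : ℝ := Real.sqrt (∑ i, (x i - y i) ^ 2)

/-- `γ` is a coupling of `μ` and `ν`. -/
def IsCoupling {α : Type*} [MeasurableSpace α]
    (γ : Measure (α × α)) (μ ν : Measure α) : Prop :=
  γ.map Prod.fst = μ ∧ γ.map Prod.snd = ν

/-- Optimal transport cost for a cost function `c`. -/
def transportCost {α : Type*} [MeasurableSpace α] (c : α → α → ℝ)
    (μ ν : Measure α) : ℝ≥0∞ :=
  ⨅ (γ : Measure (α × α)) (_ : IsCoupling γ μ ν),
    ∫⁻ p, ENNReal.ofReal (c p.1 p.2) ∂γ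

/-- Euclidean Kantorovich distance `W₁`. -/
def W1 {d : ℕ} (μ ν : Measure (Fin d → ℝ)) : ℝ≥0∞ := transportCost euclidDist μ ν

/-- The characteristic function of `μ` at `ξ ∈ ℝ^d`. -/
def charFun {d : ℕ} (μ : Measure (Fin d → ℝ)) (ξ : Fin d → ℝ) : ℂ :=
  ∫ x, Complex.exp (Complex.I * ∑ i, (ξ i : ℂ) * (x i : ℂ)) ∂μ


def tensorSum (X : Type*) [TopologicalSpace X] : Submodule ℝ C(X × X, ℝ) where
  carrier := {u | ∃ f g : C(X, ℝ), ∀ p, u p = f p.1 + g p.2}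
  add_mem' := by
    rintro a b ⟨f, g, h⟩ ⟨f', g', h'⟩
    exact ⟨f + f', g + g', fun p => by simp [h, h']; ring⟩
  zero_mem' := ⟨0, 0, fun p => by simp⟩
  smul_mem' := by
    rintro c a ⟨f, g, h⟩
    exact ⟨c • f, c • g, fun p => by simp [h]; ring⟩

lemma integrable_cont {X : Type*} [TopologicalSpace X] [CompactSpace X] 
    [MeasurableSpace X] [OpensMeasurableSpace X] (μ : Measure X) [IsFiniteMeasure μ] {E : Type*} [NormedAddCommGroup E] [SecondCountableTopologyEither X E] 
    {f : X → E} (hf : Continuous f) :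
    Integrable f μ := by
  have := (isCompact_univ (X := X)).image hf.norm
  obtain ⟨C, hC⟩ := this.bddAbove
  exact Integrable.of_bound hf.aestronglyMeasurable C (.of_forall fun x => hC ⟨x, trivial, rfl⟩)

def dualCone {Y : Type*} [TopologicalSpace Y] (w : C(Y, ℝ)) : PointedCone ℝ C(Y, ℝ) where
  carrier := {u | ∃ t : ℝ, 0 ≤ t ∧ ∀ p, t * w p ≤ u p}
  add_mem' := by
    rintro a b ⟨t, h0, h⟩ ⟨t', h0', h'⟩
    exact ⟨t + t', by positivity, fun p => by simp; nlinarith [h p, h' p]⟩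
  zero_mem' := ⟨0, le_rfl, fun p => by simp⟩
  smul_mem' := by
    rintro ⟨c, hc⟩ a ⟨t, h0, h⟩
    refine ⟨c * t, by positivity, fun p => ?_⟩
    have := mul_le_mul_of_nonneg_left (h p) hc
    change c * t * w p ≤ c * a p
    linarith

/-- Kantorovich duality on a compact metrizable space. -/
lemma duality_compact {X : Type*} [MetricSpace X] [CompactSpace X]
    [MeasurableSpace X] [BorelSpace X] (μ ν : Measure X) [IsProbabilityMeasure μ] [IsProbabilityMeasure ν]
    (c : C(X × X, ℝ)) (hc0 : ∀ x, c (x, x) = 0) (hctri : ∀ x y z, c (x, z) ≤ c (x, y) + c (y, z))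
    (hcs : ∀ x y, c (x, y) = c (y, x))
    (D : ℝ) (hD : ∀ h : C(X, ℝ), (∀ x y, h x - h y ≤ c (x, y)) → ∫ x, h x ∂μ - ∫ x, h x ∂ν ≤ D) :
    ∃ γ : Measure (X × X), IsFiniteMeasure γ ∧ γ.map Prod.fst = μ ∧ γ.map Prod.snd = ν ∧
      ∫ p, c p ∂γ ≤ D := by
  have hne : Nonempty X := by
    by_contra hX
    rw [not_nonempty_iff] at hX
    have := measure_univ (μ := μ)
    simp [Set.eq_empty_of_isEmpty] at this
  -- weak duality for general potentials
  have key : ∀ f g : C(X, ℝ), (∀ x y, f x + g y ≤ c (x, y)) → ∫ x, f x ∂μ + ∫ x, g x ∂ν ≤ D := by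
    intro f g hfg
    have hbdd : ∀ x, BddBelow (Set.range fun y => c (x, y) - g y) := by
      intro x
      refine ⟨f x, ?_⟩
      rintro _ ⟨y, rfl⟩
      linarith [hfg x y]
    let h : X → ℝ := fun x => ⨅ y, (c (x, y) - g y)
    have hlip : ∀ x y, h x - h y ≤ c (x, y) := by
      intro x y
      have : h x - c (x, y) ≤ h y := by
        apply le_ciInf
        intro z
        have := ciInf_le (hbdd x) z
        have h2 := hctri x y z
        change h x ≤ _ at this
        linarith
      linarith
    have hcont : Continuous h := by
      rw [continuous_iff_continuousAt]
      intro x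
      have : Filter.Tendsto (fun y => c (y, x)) (nhds x) (nhds 0) := by
        rw [← hc0 x]
        exact Continuous.tendsto (by fun_prop) x
      rw [ContinuousAt, tendsto_iff_dist_tendsto_zero]
      refine squeeze_zero (fun _ => dist_nonneg) (fun y => ?_) this
      rw [Real.dist_eq, abs_le]
      constructor
      · have := hlip x y
        rw [hcs] at this
        linarith
      · exact hlip y x
    have h1 := hD ⟨h, hcont⟩ hlip
    have hf : ∫ x, f x ∂μ ≤ ∫ x, h x ∂μ := by
      apply integral_mono (integrable_cont _ f.continuous) (integrable_cont _ hcont)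
      intro x
      exact le_ciInf fun y => by linarith [hfg x y]
    have hg : ∫ x, g x ∂ν ≤ ∫ x, - h x ∂ν := by
      apply integral_mono (integrable_cont _ g.continuous) (integrable_cont _ hcont.neg)
      intro x
      have := ciInf_le (hbdd x) x
      simp only [hc0] at this
      change h x ≤ _ at this
      change g x ≤ - h x
      linarith
    rw [integral_neg] at hg
    simp only [ContinuousMap.coe_mk] at h1
    linarith
  let I : C(X × X, ℝ) →ₗ[ℝ] ℝ :=
    { toFun := fun u => ∫ p, u p ∂(μ.prod ν)
      map_add' := fun u v => by
        simp only [ContinuousMap.add_apply]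
        exact integral_add (integrable_cont _ u.continuous) (integrable_cont _ v.continuous)
      map_smul' := fun r u => by
        simp only [ContinuousMap.smul_apply, RingHom.id_apply]
        exact integral_smul _ _ }
  have hI : ∀ (u : C(X × X, ℝ)) (f g : C(X, ℝ)), (∀ p, u p = f p.1 + g p.2) →
      I u = ∫ x, f x ∂μ + ∫ x, g x ∂ν := by
    intro u f g h
    change ∫ p, u p ∂(μ.prod ν) = _
    simp_rw [h]
    rw [integral_add (integrable_cont _ (by fun_prop)) (integrable_cont _ (by fun_prop)),
      integral_fun_fst, integral_fun_snd]
    simp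
  let w : C(X × X, ℝ) := ContinuousMap.const _ D - c
  obtain ⟨Λ, hΛ1, hΛ2⟩ := riesz_extension (dualCone w) ⟨tensorSum X, I.domRestrict _⟩ (by
    rintro ⟨u, f, g, h⟩ ⟨t, ht, h'⟩
    change 0 ≤ I u
    simp only at h'
    rcases ht.eq_or_lt with rfl | ht
    · apply integral_nonneg
      intro p
      simpa using h' p
    · rw [hI u f g h]
      have := key ((-t⁻¹) • f + ContinuousMap.const _ D) ((-t⁻¹) • g) (by
        intro x y
        have := h' (x, y)
        rw [h] at this
        simp [w] at this
        simp
        have h3 := mul_le_mul_of_nonneg_left this (inv_nonneg.2 ht.le)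
        rw [← mul_assoc, inv_mul_cancel₀ ht.ne'] at h3
        linarith)
      simp only [ContinuousMap.add_apply, ContinuousMap.smul_apply, ContinuousMap.const_apply] at this
      rw [integral_add (integrable_cont _ (by fun_prop)) (integrable_cont _ (by fun_prop)),
        integral_smul, integral_smul] at this
      simp at this
      have h4 : 0 ≤ t⁻¹ * (∫ x, f x ∂μ + ∫ x, g x ∂ν) := by linarith
      exact nonneg_of_mul_nonneg_right h4 (inv_pos.2 ht)) (by
    intro u
    refine ⟨⟨ContinuousMap.const _ ‖u‖, ContinuousMap.const _ ‖u‖, 0, fun p => by simp⟩, 0, le_rfl, fun p => ?_⟩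
    have := (abs_le.1 (u.norm_coe_le_norm p)).1
    simp
    linarith)
  have hpos : ∀ u : C(X × X, ℝ), (∀ p, 0 ≤ u p) → 0 ≤ Λ u := fun u hu =>
    hΛ2 u ⟨0, le_rfl, fun p => by simpa using hu p⟩
  have hw : Λ c ≤ D := by
    have h1 : 0 ≤ Λ w := hΛ2 w ⟨1, zero_le_one, fun p => by simp⟩
    have h2 : Λ (ContinuousMap.const _ D) = D := by
      have := hΛ1 ⟨ContinuousMap.const _ D, ContinuousMap.const _ D, 0, fun p => by simp⟩
      rw [this]
      change I _ = _
      rw [hI _ (ContinuousMap.const _ D) 0 (fun p => by simp)]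
      simp
    simp only [w, map_sub, h2] at h1
    linarith
  let Λ' : CompactlySupportedContinuousMap (X × X) ℝ →ₗ[ℝ] ℝ :=
    { toFun := fun u => Λ u.toContinuousMap
      map_add' := fun u v => Λ.map_add _ _
      map_smul' := fun r u => Λ.map_smul _ _ }
  let Λp : CompactlySupportedContinuousMap (X × X) ℝ →ₚ[ℝ] ℝ :=
    PositiveLinearMap.mk₀ Λ' (fun u hu => hpos _ hu)
  let γ := RealRMK.rieszMeasure Λp
  have hγ : ∀ u : C(X × X, ℝ), ∫ p, u p ∂γ = Λ u := fun u =>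
    RealRMK.integral_rieszMeasure Λp (CompactlySupportedContinuousMap.continuousMapEquiv u)
  have hfin : IsFiniteMeasure γ := inferInstance
  have hm : ∀ (u : C(X × X, ℝ)) (f g : C(X, ℝ)), (∀ p, u p = f p.1 + g p.2) →
      ∫ p, u p ∂γ = ∫ x, f x ∂μ + ∫ x, g x ∂ν := by
    intro u f g h
    rw [hγ, ← hI u f g h]
    exact hΛ1 ⟨u, f, g, h⟩
  refine ⟨γ, hfin, ?_, ?_, (hγ c).trans_le hw⟩
  · apply ext_of_forall_integral_eq_of_IsFiniteMeasure
    intro f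
    rw [integral_map measurable_fst.aemeasurable f.continuous.aestronglyMeasurable]
    have := hm ⟨fun p => f p.1, by fun_prop⟩ f.toContinuousMap 0 (fun p => by simp)
    refine Eq.trans this ?_
    simp
  · apply ext_of_forall_integral_eq_of_IsFiniteMeasure
    intro f
    rw [integral_map measurable_snd.aemeasurable f.continuous.aestronglyMeasurable]
    have := hm ⟨fun p => f p.2, by fun_prop⟩ 0 f.toContinuousMap (fun p => by simp)
    refine Eq.trans this ?_
    simp

lemma euclidDist_eq {d : ℕ} (x y : Fin d → ℝ) :
    euclidDist x y = dist (WithLp.toLp 2 x) (WithLp.toLp 2 y) := by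
  rw [EuclideanSpace.dist_eq, euclidDist]
  simp [Real.dist_eq]

lemma euclidDist_continuous {d : ℕ} :
    Continuous fun p : (Fin d → ℝ) × (Fin d → ℝ) => euclidDist p.1 p.2 := by
  unfold euclidDist
  fun_prop

lemma W1_le {d : ℕ} (μ ν : Measure (Fin d → ℝ)) [IsProbabilityMeasure μ] [IsProbabilityMeasure ν]
    (hμ : μ {x | ¬ ∀ i, x i ∈ Set.Icc (0 : ℝ) 1} = 0)
    (hν : ν {x | ¬ ∀ i, x i ∈ Set.Icc (0 : ℝ) 1} = 0) (D : ℝ)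
    (hD : ∀ h : (Fin d → ℝ) → ℝ, (∀ x y, (∀ i, x i ∈ Set.Icc (0 : ℝ) 1) →
      (∀ i, y i ∈ Set.Icc (0 : ℝ) 1) → h x - h y ≤ euclidDist x y) →
      ∫ x, h x ∂μ - ∫ x, h x ∂ν ≤ D) :
    W1 μ ν ≤ ENNReal.ofReal D := by
  let K : Set (Fin d → ℝ) := {x | ∀ i, x i ∈ Set.Icc (0 : ℝ) 1}
  have hKe : K = Set.univ.pi fun _ => Set.Icc (0 : ℝ) 1 := by ext; simp only [K, Set.mem_univ_pi, Set.mem_setOf_eq]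
  have hKc : IsCompact K := by
    rw [hKe]; exact isCompact_univ_pi fun _ => isCompact_Icc
  have hKm : MeasurableSet K := hKc.isClosed.measurableSet
  have : CompactSpace K := isCompact_iff_compactSpace.1 hKc
  have emb := MeasurableEmbedding.subtype_coe hKm
  have hres : ∀ ρ : Measure (Fin d → ℝ), ρ Kᶜ = 0 → (ρ.comap ((↑) : K → _)).map (↑) = ρ := by
    intro ρ hρ
    rw [map_comap_subtype_coe hKm]
    exact Measure.restrict_eq_self_of_ae_mem (by rw [ae_iff]; exact hρ)
  have hprob : ∀ ρ : Measure (Fin d → ℝ), IsProbabilityMeasure ρ → ρ Kᶜ = 0 →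
      IsProbabilityMeasure (ρ.comap ((↑) : K → _)) := by
    intro ρ hρp hρ
    have := hres ρ hρ
    constructor
    have h2 := measure_univ (μ := ρ)
    rw [← this, emb.map_apply] at h2
    simpa using h2
  have hμ' := hres μ hμ
  have hν' := hres ν hν
  have := hprob μ inferInstance hμ
  have := hprob ν inferInstance hν
  obtain ⟨γ, hfin, h1, h2, h3⟩ := duality_compact (μ.comap ((↑) : K → _)) (ν.comap ((↑) : K → _))
    ⟨fun p => euclidDist (p.1 : Fin d → ℝ) (p.2 : Fin d → ℝ), by
      exact euclidDist_continuous.comp (by fun_prop : Continuous fun p : K × K => ((p.1 : Fin d → ℝ), (p.2 : Fin d → ℝ)))⟩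
    (fun x => by simp [euclidDist]) (fun x y z => by
      simp only [ContinuousMap.coe_mk, euclidDist_eq]; exact dist_triangle _ _ _)
    (fun x y => by simp only [ContinuousMap.coe_mk, euclidDist_eq]; exact dist_comm _ _) D (by
      intro h hh
      classical
      have hx : ∀ ρ : Measure (Fin d → ℝ), ρ Kᶜ = 0 → ∫ x, h x ∂(ρ.comap ((↑) : K → _)) =
          ∫ x, (fun x => if hx : x ∈ K then h ⟨x, hx⟩ else 0) x ∂ρ := by
        intro ρ hρ
        conv_rhs => rw [← hres ρ hρ]
        rw [emb.integral_map]
        simp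
      rw [hx μ hμ, hx ν hν]
      apply hD
      intro x y hx hy
      have hx : x ∈ K := hx
      have hy : y ∈ K := hy
      simp only [hx, hy, dif_pos]
      exact hh ⟨x, hx⟩ ⟨y, hy⟩)
  let j : K × K → (Fin d → ℝ) × (Fin d → ℝ) := Prod.map (↑) (↑)
  have hj : Measurable j := measurable_subtype_coe.prodMap measurable_subtype_coe
  have hcpl : IsCoupling (γ.map j) μ ν := by
    constructor
    · rw [Measure.map_map measurable_fst hj]
      rw [← h1, Measure.map_map measurable_subtype_coe measurable_fst] at hμ'
      exact hμ'
    · rw [Measure.map_map measurable_snd hj]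
      rw [← h2, Measure.map_map measurable_subtype_coe measurable_snd] at hν'
      exact hν'
  refine (iInf₂_le (γ.map j) hcpl).trans ?_
  · rw [lintegral_map (euclidDist_continuous (d := d)).measurable.ennreal_ofReal hj]
    rw [← ofReal_integral_eq_lintegral_ofReal]
    · exact ENNReal.ofReal_le_ofReal h3
    · apply integrable_cont
      exact euclidDist_continuous.comp (by fun_prop : Continuous fun p : K × K => ((p.1 : Fin d → ℝ), (p.2 : Fin d → ℝ)))
    · exact .of_forall fun p => Real.sqrt_nonneg _

lemma integral_fourier_haar (k : ℤ) :
    ∫ y : UnitAddCircle, (fourier k y : ℂ) ∂AddCircle.haarAddCircle = if k = 0 then 1 else 0 := by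
  have h := (orthonormal_iff_ite.1 (orthonormal_fourier (T := (1:ℝ)))) 0 k
  rw [ContinuousMap.inner_toLp] at h
  simp only [fourier_zero, map_one] at h
  simpa [eq_comm] using h

lemma eight_norm_sq_le (y : UnitAddCircle) : 8 * ‖y‖ ^ 2 ≤ 1 - (fourier 1 y : ℂ).re := by
  induction y using QuotientAddGroup.induction_on with
  | H x =>
    rw [show ((QuotientAddGroup.mk x : UnitAddCircle)) = ((x : ℝ) : UnitAddCircle) from rfl, 
      UnitAddCircle.norm_eq, fourier_coe_apply]
    have h1 : (Complex.exp (2 * π * Complex.I * (1:ℤ) * x / (1:ℝ))).re = cos (2 * π * (x - round x)) := by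
      rw [show 2 * π * Complex.I * (1:ℤ) * x / (1:ℝ) = ((2 * π * x : ℝ) : ℂ) * Complex.I by push_cast; ring,
        Complex.exp_ofReal_mul_I_re, ← Real.cos_sub_int_mul_two_pi _ (round x)]
      congr 1; ring
    rw [h1]
    have h2 := abs_sub_round x
    have h3 := Real.cos_le_one_sub_mul_cos_sq (x := 2 * π * (x - round x)) (by
      rw [abs_mul, abs_of_pos (by positivity)]
      nlinarith [pi_pos])
    have h4 : 2 / π ^ 2 * (2 * π * (x - round x)) ^ 2 = 8 * |x - round x| ^ 2 := by
      rw [sq_abs]; field_simp; ring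
    linarith

lemma kernel_exists (N : ℕ) (hN : 2 ≤ N) : ∃ (κ : ℤ → ℝ) (K : UnitAddCircle → ℝ),
    Continuous K ∧ (∀ y, 0 ≤ K y) ∧
    (∀ y, (K y : ℂ) = ∑ k ∈ Finset.Icc (-((N:ℤ) - 2)) ((N:ℤ) - 2), (κ k : ℂ) * fourier k y) ∧
    (∀ k, |κ k| ≤ 1) ∧ ∫ y, K y ∂AddCircle.haarAddCircle = 1 ∧
    ∫ y, ‖y‖ ^ 2 * K y ∂AddCircle.haarAddCircle ≤ π ^ 2 / (16 * N ^ 2) := by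
  set α : ℝ := π / N with hα
  have hN0 : (0:ℝ) < N := by positivity
  have hNα : (N:ℝ) * α = π := by rw [hα]; field_simp
  let s : ℤ → ℝ := fun j => sin (j * α)
  let J : Finset ℤ := Finset.Icc 1 ((N:ℤ) - 1)
  let Z : ℝ := ∑ j ∈ J, s j ^ 2
  have hZ : 0 < Z := by
    apply Finset.sum_pos' (fun _ _ => sq_nonneg _)
    refine ⟨1, by simp [J]; omega, ?_⟩
    have : 0 < s 1 := by
      simp only [s]
      apply sin_pos_of_pos_of_lt_pi
      · simp [hα]; positivity
      · have : (2:ℝ) ≤ N := by exact_mod_cast hN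
        have hα0 : 0 < α := by positivity
        push_cast
        nlinarith
    positivity
  let κ : ℤ → ℝ := fun k => (∑ j ∈ J, ∑ l ∈ J, if j - l = k then s j * s l else 0) / Z
  let p : UnitAddCircle → ℂ := fun y => ∑ j ∈ J, (s j : ℂ) * fourier j y
  have hp : Continuous p := by fun_prop
  let K : UnitAddCircle → ℝ := fun y => ‖p y‖ ^ 2 / Z
  have hKc : Continuous K := by fun_prop
  have hK0 : ∀ y, 0 ≤ K y := fun y => by positivity
  have hKe : ∀ y, (K y : ℂ) = ∑ k ∈ Finset.Icc (-((N:ℤ) - 2)) ((N:ℤ) - 2), (κ k : ℂ) * fourier k y := by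
    intro y
    have h1 : ((‖p y‖ ^ 2 : ℝ) : ℂ) = ∑ j ∈ J, ∑ l ∈ J, (s j : ℂ) * s l * fourier (j - l) y := by
      rw [Complex.ofReal_pow, ← Complex.mul_conj']
      simp only [p, map_sum, map_mul, Complex.conj_ofReal, Finset.sum_mul_sum, sub_eq_add_neg, fourier_add, fourier_neg]
      refine Finset.sum_congr rfl fun j _ => Finset.sum_congr rfl fun l _ => ?_
      ring
    have h2 : ∀ k, (κ k : ℂ) * fourier k y =
        (∑ j ∈ J, ∑ l ∈ J, if j - l = k then (s j : ℂ) * s l * fourier (j - l) y else 0) / Z := by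
      intro k
      simp only [κ]
      push_cast
      rw [div_mul_eq_mul_div, Finset.sum_mul]
      congr 1
      refine Finset.sum_congr rfl fun j _ => ?_
      rw [Finset.sum_mul]
      refine Finset.sum_congr rfl fun l _ => ?_
      split_ifs with h
      · rw [h, Complex.ofReal_mul]
      · simp
    simp only [K]
    rw [Complex.ofReal_div, h1, Finset.sum_congr rfl fun k _ => h2 k, ← Finset.sum_div]
    congr 1
    symm
    rw [Finset.sum_comm]
    refine Finset.sum_congr rfl fun j hj => ?_
    rw [Finset.sum_comm]
    refine Finset.sum_congr rfl fun l hl => ?_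
    rw [Finset.sum_ite_eq, if_pos]
    simp only [J, Finset.mem_Icc] at hj hl ⊢
    omega
  have hcoef : ∀ m : ℤ, m ∈ Finset.Icc (-((N:ℤ) - 2)) ((N:ℤ) - 2) →
      ∫ y, (fourier (-m) y : ℂ) * K y ∂AddCircle.haarAddCircle = κ m := by
    intro m hm
    simp_rw [hKe, Finset.mul_sum]
    rw [integral_finsetSum]
    · have : ∀ k : ℤ, ∫ y : UnitAddCircle, (fourier (-m) y : ℂ) * ((κ k : ℂ) * fourier k y) ∂AddCircle.haarAddCircle = 
        if m = k then (κ k : ℂ) else 0 := by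
        intro k
        have : ∀ y : UnitAddCircle, (fourier (-m) y : ℂ) * ((κ k : ℂ) * fourier k y) = κ k * fourier (-m + k) y := by
          intro y; rw [fourier_add]; ring
        simp_rw [this]
        rw [integral_const_mul, integral_fourier_haar]
        have : -m + k = 0 ↔ m = k := by omega
        simp [this]
      simp_rw [this]
      rw [Finset.sum_ite_eq, if_pos hm]
    · intro k _
      exact integrable_cont _ (by fun_prop)
  have hcoef0 : ∀ m : ℤ, m ∉ Finset.Icc (-((N:ℤ) - 2)) ((N:ℤ) - 2) → κ m = 0 := by
    intro m hm
    simp only [κ]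
    rw [_root_.div_eq_zero_iff]; left
    refine Finset.sum_eq_zero fun j hj => Finset.sum_eq_zero fun l hl => if_neg ?_
    simp only [J, Finset.mem_Icc] at hj hl hm
    omega
  have hcoef' : ∀ m : ℤ, ∫ y, (fourier (-m) y : ℂ) * K y ∂AddCircle.haarAddCircle = κ m := by
    intro m
    by_cases hm : m ∈ Finset.Icc (-((N:ℤ) - 2)) ((N:ℤ) - 2)
    · exact hcoef m hm
    · rw [hcoef0 m hm]
      simp_rw [hKe, Finset.mul_sum]
      rw [integral_finsetSum]
      · push_cast
        refine Finset.sum_eq_zero fun k hk => ?_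
        have : ∀ y : UnitAddCircle, (fourier (-m) y : ℂ) * ((κ k : ℂ) * fourier k y) = κ k * fourier (-m + k) y := by
          intro y; rw [fourier_add]; ring
        simp_rw [this]
        rw [integral_const_mul, integral_fourier_haar, if_neg]
        · simp
        · intro h
          apply hm
          have : m = k := by omega
          rwa [this]
      · intro k _
        exact integrable_cont _ (by fun_prop)
  have hκ0 : κ 0 = 1 := by
    simp only [κ]
    rw [div_eq_one_iff_eq hZ.ne']
    refine Finset.sum_congr rfl fun j hj => ?_
    simp only [sub_eq_zero]
    rw [Finset.sum_ite_eq, if_pos hj, sq]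
  have hint : ∫ y, K y ∂AddCircle.haarAddCircle = 1 := by
    have := hcoef' 0
    simp only [neg_zero, fourier_zero, one_mul, hκ0] at this
    rw [integral_complex_ofReal] at this
    exact_mod_cast this
  have hcos : ∀ m : ℤ, ∫ y, (fourier (-m) y : ℂ).re * K y ∂AddCircle.haarAddCircle = κ m := by
    intro m
    have := congrArg Complex.re (hcoef' m)
    rw [Complex.ofReal_re] at this
    rw [← this]
    rw [← Complex.reCLM_apply, ← ContinuousLinearMap.integral_comp_comm Complex.reCLM (integrable_cont _ (by fun_prop))]
    simp
  have hsum : κ 1 + κ (-1) = 2 * cos α := by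
    have e1 : κ 1 = (∑ j ∈ J, s j * s (j - 1)) / Z := by
      simp only [κ]
      congr 1
      refine Finset.sum_congr rfl fun j hj => ?_
      have : ∀ l, j - l = 1 ↔ j - 1 = l := fun l => by omega
      simp only [this]
      rw [Finset.sum_ite_eq]
      split_ifs with h
      · rfl
      · have : j - 1 = 0 := by simp only [J, Finset.mem_Icc] at hj h; omega
        rw [this]; simp [s]
    have e2 : κ (-1) = (∑ j ∈ J, s j * s (j + 1)) / Z := by
      simp only [κ]
      congr 1
      refine Finset.sum_congr rfl fun j hj => ?_
      have : ∀ l, j - l = -1 ↔ j + 1 = l := fun l => by omega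
      simp only [this]
      rw [Finset.sum_ite_eq]
      split_ifs with h
      · rfl
      · have : j + 1 = N := by simp only [J, Finset.mem_Icc] at hj h; omega
        rw [this]; simp [s, hNα]
    rw [e1, e2, ← add_div, ← Finset.sum_add_distrib, div_eq_iff hZ.ne', Finset.mul_sum]
    refine Finset.sum_congr rfl fun j _ => ?_
    simp only [s]
    push_cast
    rw [sub_mul, add_mul, one_mul, sin_add, sin_sub]
    ring
  refine ⟨κ, K, hKc, hK0, hKe, ?_, hint, ?_⟩
  · intro k
    rw [← hint, ← hcos k]
    refine (abs_integral_le_integral_abs).trans ?_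
    refine integral_mono (integrable_cont _ (by fun_prop)) (integrable_cont _ (by fun_prop)) fun y => ?_
    simp only [abs_mul, abs_of_nonneg (hK0 y)]
    have : |(fourier (-k) y : ℂ).re| ≤ 1 := by
      refine (Complex.abs_re_le_norm _).trans ?_
      rw [fourier_apply, Circle.norm_coe]
    nlinarith [hK0 y]
  · have hc1 : ∫ y, (fourier 1 y : ℂ).re * K y ∂AddCircle.haarAddCircle = cos α := by
      have h1 := hcos 1
      have h2 := hcos (-1)
      simp only [neg_neg] at h2
      have h3 : ∫ y, (fourier (-1) y : ℂ).re * K y ∂AddCircle.haarAddCircle =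
          ∫ y, (fourier 1 y : ℂ).re * K y ∂AddCircle.haarAddCircle := by
        congr 1; ext y; rw [fourier_neg, Complex.conj_re]
      linarith
    have h1 : ∫ y, 8 * (‖y‖ ^ 2 * K y) ∂AddCircle.haarAddCircle ≤
        ∫ y, (K y - (fourier 1 y : ℂ).re * K y) ∂AddCircle.haarAddCircle := by
      refine integral_mono (integrable_cont _ (by fun_prop)) (integrable_cont _ (by fun_prop)) fun y => ?_
      have := eight_norm_sq_le y
      simp only
      nlinarith [hK0 y]
    rw [integral_const_mul, integral_sub (integrable_cont _ (by fun_prop)) (integrable_cont _ (by fun_prop)), hint, hc1] at h1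
    have h2 := one_sub_sq_div_two_le_cos (x := α)
    have : α ^ 2 / 2 = 8 * (π ^ 2 / (16 * N ^ 2)) := by rw [hα]; field_simp; ring
    linarith

/-- Normalized Haar measure on the torus. -/
def torusM (d : ℕ) : Measure (Fin d → UnitAddCircle) := Measure.pi fun _ => AddCircle.haarAddCircle

instance (d : ℕ) : IsProbabilityMeasure (torusM d) := by unfold torusM; infer_instance
instance (d : ℕ) : (torusM d).IsAddHaarMeasure := by unfold torusM; infer_instance

/-- Fourier coefficient on the torus. -/
def tcoef {d : ℕ} (g : (Fin d → UnitAddCircle) → ℂ) (m : Fin d → ℤ) : ℂ :=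
  ∫ z, UnitAddTorus.mFourier (-m) z * g z ∂(torusM d)

lemma mFourier_bd {d : ℕ} (m : Fin d → ℤ) (z : Fin d → UnitAddCircle) : ‖UnitAddTorus.mFourier m z‖ = 1 := by
  simp only [UnitAddTorus.mFourier, fourier_apply, ContinuousMap.coe_mk, norm_prod, Circle.norm_coe,
      Finset.prod_const_one]

lemma integral_mFourier {d : ℕ} (m : Fin d → ℤ) :
    ∫ z, UnitAddTorus.mFourier m z ∂(torusM d) = if m = 0 then 1 else 0 := by
  have h := integral_fintype_prod_eq_prod (𝕜 := ℂ) (fun (i : Fin d) (y : UnitAddCircle) => (fourier (m i) y : ℂ))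
    (μ := fun _ => AddCircle.haarAddCircle)
  refine h.trans ?_
  simp_rw [integral_fourier_haar]
  rw [Finset.prod_ite_zero]
  simp [funext_iff]

lemma tcoef_bessel {d : ℕ} (g : (Fin d → UnitAddCircle) → ℂ) (hg : Continuous g) (C : ℝ)
    (hC : ∀ z, ‖g z‖ ≤ C) (F : Finset (Fin d → ℤ)) : ∑ m ∈ F, ‖tcoef g m‖ ^ 2 ≤ C ^ 2 := by
  let v : (Fin d → ℤ) → Lp ℂ 2 (torusM d) := fun m =>
    ContinuousMap.toLp 2 (torusM d) ℂ (UnitAddTorus.mFourier m : C(Fin d → UnitAddCircle, ℂ))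
  have hv : Orthonormal ℂ v := by
    rw [orthonormal_iff_ite]
    intro m k
    simp only [v]
    rw [ContinuousMap.inner_toLp]
    have : ∀ z : Fin d → UnitAddCircle, UnitAddTorus.mFourier k z * (starRingEnd ℂ) (UnitAddTorus.mFourier m z)
        = UnitAddTorus.mFourier (k + -m) z := by
      intro z
      rw [UnitAddTorus.mFourier_add, UnitAddTorus.mFourier_neg]
    simp_rw [this]
    rw [integral_mFourier]
    simp only [add_neg_eq_zero, eq_comm]
  have h := hv.sum_inner_products_le (ContinuousMap.toLp 2 (torusM d) ℂ ⟨g, hg⟩) (s := F)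
  have h1 : ∀ m, inner ℂ (v m) (ContinuousMap.toLp 2 (torusM d) ℂ ⟨g, hg⟩) = tcoef g m := by
    intro m
    simp only [v]
    rw [ContinuousMap.inner_toLp]
    unfold tcoef
    congr 1
    ext z
    rw [UnitAddTorus.mFourier_neg, mul_comm]
    rfl
  have h2 : ‖(ContinuousMap.toLp 2 (torusM d) ℂ ⟨g, hg⟩)‖ ≤ C := by
    refine (ContinuousLinearMap.le_opNorm _ _).trans ?_
    have h3 := ContinuousMap.toLp_norm_le (p := 2) (μ := torusM d) (E := ℂ) (𝕜 := ℂ)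
    simp [measureUnivNNReal] at h3
    have hC0 : 0 ≤ C := (norm_nonneg _).trans (hC 0)
    have h4 := (ContinuousMap.norm_le ⟨g, hg⟩ hC0).2 hC
    calc _ ≤ 1 * C := by gcongr
      _ = C := one_mul _
  have h5 := pow_le_pow_left₀ (norm_nonneg _) h2 2
  simp_rw [h1] at h
  exact h.trans h5

lemma mFourier_add_arg {d : ℕ} (m : Fin d → ℤ) (z w : Fin d → UnitAddCircle) :
    UnitAddTorus.mFourier m (z + w) = UnitAddTorus.mFourier m z * UnitAddTorus.mFourier m w := by
  simp only [UnitAddTorus.mFourier, ContinuousMap.coe_mk, ← Finset.prod_mul_distrib]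
  refine Finset.prod_congr rfl fun i _ => ?_
  simp only [fourier_apply, Pi.add_apply, smul_add, AddCircle.toCircle_add, Circle.coe_mul]

lemma mFourier_mul_neg {d : ℕ} (m : Fin d → ℤ) (w : Fin d → UnitAddCircle) :
    UnitAddTorus.mFourier m w * UnitAddTorus.mFourier (-m) w = 1 := by
  rw [← UnitAddTorus.mFourier_add, add_neg_cancel, UnitAddTorus.mFourier_zero]; rfl

lemma tcoef_shift {d : ℕ} (g : (Fin d → UnitAddCircle) → ℂ) (m : Fin d → ℤ) (w : Fin d → UnitAddCircle) :
    tcoef (fun z => g (z + w)) m = UnitAddTorus.mFourier m w * tcoef g m := by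
  unfold tcoef
  rw [← integral_const_mul]
  conv_rhs => rw [← integral_add_right_eq_self _ w]
  congr 1
  ext z
  rw [mFourier_add_arg]
  linear_combination (-(UnitAddTorus.mFourier (-m) z * g (z + w))) * mFourier_mul_neg m w

lemma tcoef_deriv {d : ℕ} (H : (Fin d → UnitAddCircle) → ℝ) (hH : Continuous H)
    (hL : ∀ z w, |H (z + w) - H z| ≤ 2 * Real.sqrt (∑ i, ‖w i‖ ^ 2)) (F : Finset (Fin d → ℤ)) (i : Fin d) :
    ∑ m ∈ F, π ^ 2 * (m i : ℝ) ^ 2 * ‖tcoef (fun z => (H z : ℂ)) m‖ ^ 2 ≤ 1 := by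
  let w : ℝ → Fin d → UnitAddCircle := fun t => Pi.single i (t : UnitAddCircle)
  have hw : ∀ t m, UnitAddTorus.mFourier m (w t) = Complex.exp (2 * π * Complex.I * (m i) * t) := by
    intro t m
    simp only [UnitAddTorus.mFourier, ContinuousMap.coe_mk, w]
    rw [Finset.prod_eq_single i]
    · rw [Pi.single_eq_same, fourier_coe_apply]; simp
    · intro j _ hj
      rw [Pi.single_eq_of_ne hj, fourier_eval_zero]
    · simp
  have hws : ∀ t, Real.sqrt (∑ j, ‖w t j‖ ^ 2) ≤ |t| := by
    intro t
    rw [Finset.sum_eq_single i]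
    · simp only [w, Pi.single_eq_same]
      rw [Real.sqrt_sq (norm_nonneg _)]
      exact QuotientAddGroup.norm_mk_le_norm
    · intro j _ hj
      simp [w, Pi.single_eq_of_ne hj]
    · simp
  have h1 : ∀ t : ℝ, ∑ m ∈ F, ‖(Complex.exp (2 * π * Complex.I * (m i) * t) - 1) * tcoef (fun z => (H z : ℂ)) m‖ ^ 2 ≤ (2 * |t|) ^ 2 := by
    intro t
    have := tcoef_bessel (fun z => (H (z + w t) : ℂ) - H z) (by fun_prop) (2 * |t|) (by
      intro z
      rw [← Complex.ofReal_sub, Complex.norm_real, Real.norm_eq_abs]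
      exact (hL z (w t)).trans (by linarith [hws t])) F
    refine le_trans (le_of_eq ?_) this
    refine Finset.sum_congr rfl fun m _ => ?_
    rw [sub_mul, ← hw, ← tcoef_shift, one_mul]
    congr 2
    unfold tcoef
    rw [← integral_sub (integrable_cont _ (by fun_prop)) (integrable_cont _ (by fun_prop))]
    simp_rw [mul_sub]
  have h2 : ∀ m : Fin d → ℤ, Filter.Tendsto (fun t : ℝ => ‖t⁻¹ • (Complex.exp (2 * π * Complex.I * (m i) * t) - 1)‖ ^ 2 * ‖tcoef (fun z => (H z : ℂ)) m‖ ^ 2)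
      (nhdsWithin 0 {0}ᶜ) (nhds (‖2 * π * Complex.I * (m i)‖ ^ 2 * ‖tcoef (fun z => (H z : ℂ)) m‖ ^ 2)) := by
    intro m
    have hd : HasDerivAt (fun t : ℝ => Complex.exp (2 * π * Complex.I * (m i) * t)) (2 * π * Complex.I * (m i)) 0 := by
      have := ((Complex.ofRealCLM.hasDerivAt (x := 0)).const_mul (2 * π * Complex.I * (m i))).cexp
      simpa using this
    have := hd.tendsto_slope_zero
    simp at this
    refine Filter.Tendsto.mul_const _ (this.norm.pow 2 |>.congr ?_ |>.trans (le_of_eq ?_))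
    · intro t; simp
    · simp
  have h3 := tendsto_finsetSum F fun m _ => h2 m
  have h4 := le_of_tendsto (b := 4) h3 (by
    filter_upwards [self_mem_nhdsWithin] with t ht
    have ht : t ≠ 0 := ht
    have := h1 t
    have h5 : ∑ m ∈ F, ‖t⁻¹ • (Complex.exp (2 * π * Complex.I * (m i) * t) - 1)‖ ^ 2 * ‖tcoef (fun z => (H z : ℂ)) m‖ ^ 2
      = (t ^ 2)⁻¹ * ∑ m ∈ F, ‖(Complex.exp (2 * π * Complex.I * (m i) * t) - 1) * tcoef (fun z => (H z : ℂ)) m‖ ^ 2 := by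
      rw [Finset.mul_sum]
      refine Finset.sum_congr rfl fun m _ => ?_
      rw [norm_smul, norm_mul, mul_pow, mul_pow, norm_inv, Real.norm_eq_abs, inv_pow, sq_abs]
      ring
    rw [h5]
    rw [mul_pow, sq_abs] at this
    have ht2 : 0 < t ^ 2 := by positivity
    rw [inv_mul_le_iff₀ ht2]
    linarith)
  have h6 : ∑ m ∈ F, ‖2 * π * Complex.I * (m i)‖ ^ 2 * ‖tcoef (fun z => (H z : ℂ)) m‖ ^ 2 =
      4 * ∑ m ∈ F, π ^ 2 * (m i : ℝ) ^ 2 * ‖tcoef (fun z => (H z : ℂ)) m‖ ^ 2 := by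
    rw [Finset.mul_sum]
    refine Finset.sum_congr rfl fun m _ => ?_
    have : ‖2 * π * Complex.I * (m i)‖ ^ 2 = 4 * π ^ 2 * (m i : ℝ) ^ 2 := by
      simp only [norm_mul, Complex.norm_I, Complex.norm_real, Complex.norm_intCast, Complex.norm_ofNat, mul_pow,
        Real.norm_eq_abs, sq_abs]
      ring
    rw [this]; ring
  rw [h6] at h4
  linarith

instance (d : ℕ) : (torusM d).IsNegInvariant := by
  unfold torusM
  exact Measure.pi.isNegInvariant _

lemma mFourier_neg_arg {d : ℕ} (m : Fin d → ℤ) (y : Fin d → UnitAddCircle) :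
    UnitAddTorus.mFourier m (-y) = UnitAddTorus.mFourier (-m) y := by
  simp only [UnitAddTorus.mFourier, ContinuousMap.coe_mk]
  refine Finset.prod_congr rfl fun i _ => ?_
  simp [fourier_apply]

/-- The frequency box. -/
def fbox (d N : ℕ) : Finset (Fin d → ℤ) :=
  Fintype.piFinset fun _ => Finset.Icc (-((N:ℤ) - 2)) ((N:ℤ) - 2)

lemma smooth_approx {d : ℕ} (hd : 0 < d) (N : ℕ) (hN : 2 ≤ N) (H : (Fin d → UnitAddCircle) → ℝ) (hH : Continuous H)
    (hL : ∀ z w, |H (z + w) - H z| ≤ 2 * Real.sqrt (∑ i, ‖w i‖ ^ 2)) :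
    ∃ c : (Fin d → ℤ) → ℝ, (∀ m, |c m| ≤ 1) ∧ ∀ z,
      ‖(H z : ℂ) - ∑ m ∈ fbox d N, (c m : ℂ) * tcoef (fun z => (H z : ℂ)) m * UnitAddTorus.mFourier m z‖
        ≤ Real.sqrt d * π / (2 * N) := by
  obtain ⟨κ, K, hKc, hK0, hKe, hκ, hK1, hK2⟩ := kernel_exists N hN
  have hN0 : (0:ℝ) < N := by positivity
  let KK : (Fin d → UnitAddCircle) → ℝ := fun y => ∏ i, K (y i)
  have hKKc : Continuous KK := by fun_prop
  have hKK0 : ∀ y, 0 ≤ KK y := fun y => Finset.prod_nonneg fun i _ => hK0 _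
  have hKKe : ∀ y, (KK y : ℂ) = ∑ m ∈ fbox d N, ((∏ i, κ (m i) : ℝ) : ℂ) * UnitAddTorus.mFourier m y := by
    intro y
    simp only [KK]
    push_cast
    simp_rw [hKe]
    rw [Finset.prod_univ_sum]
    refine Finset.sum_congr rfl fun m _ => ?_
    rw [Finset.prod_mul_distrib]
    rfl
  have hKK1 : ∫ y, KK y ∂(torusM d) = 1 := by
    refine (integral_fintype_prod_eq_prod (𝕜 := ℝ) (fun (_ : Fin d) (y : UnitAddCircle) => K y)
      (μ := fun _ => AddCircle.haarAddCircle)).trans ?_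
    simp [hK1]
  have hKK2 : ∀ i, ∫ y, ‖y i‖ ^ 2 * KK y ∂(torusM d) ≤ π ^ 2 / (16 * N ^ 2) := by
    intro i
    have e : ∀ y : Fin d → UnitAddCircle, ‖y i‖ ^ 2 * KK y = ∏ j, ((if j = i then ‖y j‖ ^ 2 else 1) * K (y j)) := by
      intro y
      rw [Finset.prod_mul_distrib, Finset.prod_ite_eq' Finset.univ i]
      simp [KK]
    simp_rw [e]
    refine ((integral_fintype_prod_eq_prod (𝕜 := ℝ) (fun (j : Fin d) (y : UnitAddCircle) => 
      (if j = i then ‖y‖ ^ 2 else 1) * K y)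
      (μ := fun _ => AddCircle.haarAddCircle)).trans ?_).trans_le hK2
    rw [Finset.prod_eq_single i]
    · simp
    · intro j _ hj
      simp [hj, hK1]
    · simp
  refine ⟨fun m => ∏ i, κ (m i), ?_, ?_⟩
  · intro m
    simp only
    rw [Finset.abs_prod]
    exact Finset.prod_le_one (fun _ _ => abs_nonneg _) fun i _ => hκ _
  · intro z
    have h1 : ∑ m ∈ fbox d N, ((∏ i, κ (m i) : ℝ) : ℂ) * tcoef (fun z => (H z : ℂ)) m * UnitAddTorus.mFourier m z
        = ∫ y, ((H (z - y) * KK y : ℝ) : ℂ) ∂(torusM d) := by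
      refine Eq.trans ?_ (integral_sub_left_eq_self (fun y => ((H (z - y) * KK y : ℝ) : ℂ)) (torusM d) z)
      simp only [_root_.sub_sub_cancel]
      push_cast
      simp_rw [hKKe, Finset.mul_sum]
      rw [integral_finsetSum _ (fun m _ => integrable_cont _ (by fun_prop))]
      refine Finset.sum_congr rfl fun m _ => ?_
      unfold tcoef
      rw [mul_assoc, mul_comm (integral _ _), ← integral_const_mul, ← integral_const_mul]
      congr 1
      ext y
      rw [sub_eq_add_neg, mFourier_add_arg, mFourier_neg_arg]
      push_cast
      ring
    rw [h1, integral_complex_ofReal, ← Complex.ofReal_sub, Complex.norm_real, Real.norm_eq_abs]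
    have h2 : H z = ∫ y, H z * KK y ∂(torusM d) := by
      rw [integral_const_mul, hKK1, mul_one]
    rw [h2, ← integral_sub (integrable_cont _ (by fun_prop)) (integrable_cont _ (by fun_prop))]
    refine (abs_integral_le_integral_abs).trans ?_
    set s : ℝ := Real.sqrt d * (π / (4 * N)) with hs
    have hd' : (0:ℝ) < d := by exact_mod_cast hd
    have hs0 : 0 < s := by positivity
    have h3 : ∫ y, |H z * KK y - H (z - y) * KK y| ∂(torusM d) ≤
        ∫ y, (s⁻¹ * ∑ i, ‖y i‖ ^ 2 * KK y + s * KK y) ∂(torusM d) := by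
      refine integral_mono (integrable_cont _ (by fun_prop)) (integrable_cont _ (by fun_prop)) fun y => ?_
      simp only
      rw [← sub_mul, abs_mul, abs_of_nonneg (hKK0 y), ← Finset.sum_mul, ← mul_assoc, ← add_mul]
      refine mul_le_mul_of_nonneg_right ?_ (hKK0 y)
      have h4 := hL (z - y) y
      rw [sub_add_cancel] at h4
      refine h4.trans ?_
      set q := ∑ i, ‖y i‖ ^ 2
      have hq : 0 ≤ q := Finset.sum_nonneg fun _ _ => sq_nonneg _
      have h5 : s⁻¹ * q + s - 2 * √q = s⁻¹ * (√q - s) ^ 2 := by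
        rw [sub_sq, Real.sq_sqrt hq]; field_simp; ring
      have : 0 ≤ s⁻¹ * (√q - s) ^ 2 := by positivity
      linarith
    refine h3.trans ?_
    rw [integral_add (integrable_cont _ (by fun_prop)) (integrable_cont _ (by fun_prop)), integral_const_mul,
      integral_const_mul, hKK1, integral_finsetSum _ (fun i _ => integrable_cont _ (by fun_prop))]
    have h6 : ∑ i : Fin d, ∫ y, ‖y i‖ ^ 2 * KK y ∂(torusM d) ≤ s ^ 2 := by
      refine (Finset.sum_le_sum fun i _ => hKK2 i).trans (le_of_eq ?_)
      rw [hs, mul_pow, Real.sq_sqrt hd'.le]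
      simp
      left
      field_simp; norm_num
    have h7 : s⁻¹ * ∑ i : Fin d, ∫ y, ‖y i‖ ^ 2 * KK y ∂(torusM d) ≤ s := by
      rw [inv_mul_le_iff₀ hs0, ← sq]
      exact h6
    have h8 : √d * π / (2 * N) = s + s := by rw [hs]; field_simp; ring
    rw [h8]
    linarith

lemma norm_half_coe {t : ℝ} (ht : t ∈ Set.Icc (0:ℝ) 1) : 2 * ‖((t / 2 : ℝ) : UnitAddCircle)‖ = t := by
  have h : ‖((t / 2 : ℝ) : UnitAddCircle)‖ = |t / 2| := by
    rw [AddCircle.norm_coe_eq_abs_iff (p := 1) one_ne_zero, abs_of_nonneg (by linarith [ht.1]), abs_one]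
    linarith [ht.2]
  rw [h, abs_of_nonneg (by linarith [ht.1])]
  ring

/-- Half-scaling to the torus. -/
def toTorus {d : ℕ} (x : Fin d → ℝ) : Fin d → UnitAddCircle := fun i => ((x i / 2 : ℝ) : UnitAddCircle)

lemma toTorus_continuous {d : ℕ} : Continuous (toTorus (d := d)) := by
  unfold toTorus
  refine continuous_pi fun i => ?_
  exact (AddCircle.continuous_mk' 1).comp (by fun_prop)

lemma mFourier_toTorus {d : ℕ} (m : Fin d → ℤ) (x : Fin d → ℝ) :
    UnitAddTorus.mFourier m (toTorus x)
      = Complex.exp (Complex.I * ∑ i, ((π * m i : ℝ) : ℂ) * (x i : ℂ)) := by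
  simp only [UnitAddTorus.mFourier, ContinuousMap.coe_mk, toTorus]
  rw [Finset.mul_sum, Complex.exp_sum]
  refine Finset.prod_congr rfl fun i _ => ?_
  rw [fourier_coe_apply]
  congr 1
  push_cast
  ring

lemma integral_mFourier_map {d : ℕ} (μ : Measure (Fin d → ℝ)) (m : Fin d → ℤ) :
    ∫ z, UnitAddTorus.mFourier m z ∂(μ.map toTorus) = charFun μ (fun i => π * m i) := by
  rw [integral_map toTorus_continuous.measurable.aemeasurable
    (by exact (UnitAddTorus.mFourier m).continuous.aestronglyMeasurable)]
  simp_rw [mFourier_toTorus]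
  rfl

/-- The frequency norm squared. -/
def qf {d : ℕ} (m : Fin d → ℤ) : ℝ := ∑ i, (m i : ℝ) ^ 2

lemma qf_nonneg {d : ℕ} (m : Fin d → ℤ) : 0 ≤ qf m := Finset.sum_nonneg fun _ _ => sq_nonneg _

lemma qf_pos {d : ℕ} {m : Fin d → ℤ} (hm : m ≠ 0) : 0 < qf m := by
  obtain ⟨i, hi⟩ := Function.ne_iff.mp hm
  refine Finset.sum_pos' (fun _ _ => sq_nonneg _) ⟨i, Finset.mem_univ _, ?_⟩
  have : (m i : ℝ) ≠ 0 := by exact_mod_cast hi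
  positivity

lemma W1_le_fourier {d : ℕ} (hd : 0 < d) (N : ℕ) (hN : 2 ≤ N) (μ ν : Measure (Fin d → ℝ))
    [IsProbabilityMeasure μ] [IsProbabilityMeasure ν]
    (hμ : μ {x | ¬ ∀ i, x i ∈ Set.Icc (0 : ℝ) 1} = 0)
    (hν : ν {x | ¬ ∀ i, x i ∈ Set.Icc (0 : ℝ) 1} = 0) :
    W1 μ ν ≤ ENNReal.ofReal (π * √d / N + √d / π * √(∑ m ∈ (fbox d N).erase 0,
      ‖charFun μ (fun i => π * m i) - charFun ν (fun i => π * m i)‖ ^ 2 / qf m)) := by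
  refine W1_le μ ν hμ hν _ fun h hh => ?_
  let p : (Fin d → UnitAddCircle) → (Fin d → ℝ) := fun z i => 2 * ‖z i‖
  have hp : ∀ z i, p z i ∈ Set.Icc (0:ℝ) 1 := by
    intro z i
    have := AddCircle.norm_le_half_period (p := 1) (x := z i) one_ne_zero
    rw [abs_one] at this
    exact ⟨by positivity, by simp only [p]; linarith⟩
  let H : (Fin d → UnitAddCircle) → ℝ := fun z => h (p z)
  have hed : ∀ z w, euclidDist (p (z + w)) (p z) ≤ 2 * √(∑ i, ‖w i‖ ^ 2) := by
    intro z w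
    unfold euclidDist
    rw [Real.sqrt_le_left (by positivity), mul_pow, Real.sq_sqrt (by positivity), Finset.mul_sum]
    refine Finset.sum_le_sum fun i _ => ?_
    have h1 : |‖z i + w i‖ - ‖z i‖| ≤ ‖w i‖ := by
      refine (abs_norm_sub_norm_le _ _).trans ?_
      simp
    have h2 := pow_le_pow_left₀ (abs_nonneg _) h1 2
    rw [sq_abs] at h2
    simp only [p, Pi.add_apply]
    nlinarith
  have hL : ∀ z w, |H (z + w) - H z| ≤ 2 * √(∑ i, ‖w i‖ ^ 2) := by
    intro z w
    rw [abs_le]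
    constructor
    · have h1 := hh (p z) (p (z + w)) (hp _) (hp _)
      have h2 := hed z w
      have h3 : euclidDist (p z) (p (z + w)) = euclidDist (p (z + w)) (p z) := by
        rw [euclidDist_eq, euclidDist_eq, dist_comm]
      simp only [H]
      linarith
    · exact (hh _ _ (hp _) (hp _)).trans (hed z w)
  have hH : Continuous H := by
    rw [continuous_iff_continuousAt]
    intro z
    rw [ContinuousAt, tendsto_iff_dist_tendsto_zero]
    refine squeeze_zero (g := fun y => 2 * √(∑ i, ‖(y - z) i‖ ^ 2)) (fun _ => dist_nonneg) (fun y => ?_) ?_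
    · have := hL z (y - z)
      rw [add_sub_cancel] at this
      rwa [Real.dist_eq]
    · have hc : Continuous fun y : Fin d → UnitAddCircle => 2 * √(∑ i, ‖(y - z) i‖ ^ 2) := by fun_prop
      have := hc.tendsto z
      simpa using this
  obtain ⟨c, hc, hap⟩ := smooth_approx hd N hN H hH hL
  set a : (Fin d → ℤ) → ℂ := tcoef (fun z => (H z : ℂ)) with ha
  set ε := √d * π / (2 * N) with hε
  have key : ∀ (ρ : Measure (Fin d → ℝ)) [IsProbabilityMeasure ρ],
      ρ {x | ¬ ∀ i, x i ∈ Set.Icc (0 : ℝ) 1} = 0 →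
      ‖((∫ x, h x ∂ρ : ℝ) : ℂ) - ∑ m ∈ fbox d N, (c m : ℂ) * a m * charFun ρ (fun i => π * m i)‖ ≤ ε := by
    intro ρ _ hρ
    have hPr : IsProbabilityMeasure (ρ.map toTorus) :=
      Measure.isProbabilityMeasure_map toTorus_continuous.measurable.aemeasurable
    have e1 : ∫ x, h x ∂ρ = ∫ z, H z ∂(ρ.map toTorus) := by
      rw [integral_map toTorus_continuous.measurable.aemeasurable hH.aestronglyMeasurable]
      refine integral_congr_ae ?_
      have : ∀ᵐ x ∂ρ, ∀ i, x i ∈ Set.Icc (0 : ℝ) 1 := hρ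
      filter_upwards [this] with x hx
      simp only [H]
      congr 1
      ext i
      exact (norm_half_coe (hx i)).symm
    have e2 : ∑ m ∈ fbox d N, (c m : ℂ) * a m * charFun ρ (fun i => π * m i)
        = ∫ z, ∑ m ∈ fbox d N, (c m : ℂ) * a m * UnitAddTorus.mFourier m z ∂(ρ.map toTorus) := by
      rw [integral_finsetSum _ (fun m _ => integrable_cont _ (by fun_prop))]
      refine Finset.sum_congr rfl fun m _ => ?_
      rw [integral_const_mul, integral_mFourier_map]
    rw [e1, e2, ← integral_complex_ofReal, ← integral_sub (integrable_cont _ (by fun_prop))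
      (integrable_cont _ (by fun_prop))]
    refine (norm_integral_le_of_norm_le_const (C := ε) (Filter.Eventually.of_forall hap)).trans ?_
    simp
  have k1 := key μ hμ
  have k2 := key ν hν
  set u : (Fin d → ℤ) → ℂ := fun m => charFun μ (fun i => π * m i) - charFun ν (fun i => π * m i) with hu
  have hu0 : u 0 = 0 := by simp [hu, _root_.charFun]
  have hsum : ‖∑ m ∈ fbox d N, (c m : ℂ) * a m * u m‖ ≤ √d / π * √(∑ m ∈ (fbox d N).erase 0, ‖u m‖ ^ 2 / qf m) := by
    have e0 : ∑ m ∈ fbox d N, (c m : ℂ) * a m * u m = ∑ m ∈ (fbox d N).erase 0, (c m : ℂ) * a m * u m := by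
      symm
      refine Finset.sum_erase _ ?_
      simp [hu0]
    rw [e0]
    refine (norm_sum_le _ _).trans ?_
    have e3 : ∀ m ∈ (fbox d N).erase 0, ‖(c m : ℂ) * a m * u m‖ ≤
        (π * √(qf m) * ‖a m‖) * (‖u m‖ / (π * √(qf m))) := by
      intro m hm
      have hq : 0 < √(qf m) := Real.sqrt_pos.mpr (qf_pos (Finset.ne_of_mem_erase hm))
      have : (π * √(qf m) * ‖a m‖) * (‖u m‖ / (π * √(qf m))) = 1 * ‖a m‖ * ‖u m‖ := by
        field_simp
      rw [this, norm_mul, norm_mul, Complex.norm_real, Real.norm_eq_abs]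
      gcongr
      exact hc m
    refine (Finset.sum_le_sum e3).trans ?_
    refine (Real.sum_mul_le_sqrt_mul_sqrt _ _ _).trans ?_
    have e4 : ∑ m ∈ (fbox d N).erase 0, (π * √(qf m) * ‖a m‖) ^ 2 ≤ d := by
      have : ∀ m, (π * √(qf m) * ‖a m‖) ^ 2 = ∑ i, π ^ 2 * (m i : ℝ) ^ 2 * ‖a m‖ ^ 2 := by
        intro m
        rw [mul_pow, mul_pow, Real.sq_sqrt (qf_nonneg m), qf, Finset.mul_sum, Finset.sum_mul]
      simp_rw [this]
      rw [Finset.sum_comm]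
      refine (Finset.sum_le_sum fun i _ => tcoef_deriv H hH hL _ i).trans ?_
      simp
    have e5 : √(∑ m ∈ (fbox d N).erase 0, (‖u m‖ / (π * √(qf m))) ^ 2)
        = 1 / π * √(∑ m ∈ (fbox d N).erase 0, ‖u m‖ ^ 2 / qf m) := by
      have : ∑ m ∈ (fbox d N).erase 0, (‖u m‖ / (π * √(qf m))) ^ 2
          = (1 / π) ^ 2 * ∑ m ∈ (fbox d N).erase 0, ‖u m‖ ^ 2 / qf m := by
        rw [Finset.mul_sum]
        refine Finset.sum_congr rfl fun m _ => ?_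
        rw [div_pow, mul_pow, Real.sq_sqrt (qf_nonneg m)]
        rw [div_pow, one_pow, div_mul_div_comm, one_mul]
      rw [this, Real.sqrt_mul (by positivity), Real.sqrt_sq (by positivity)]
    rw [e5, ← mul_assoc]
    refine mul_le_mul_of_nonneg_right ?_ (Real.sqrt_nonneg _)
    rw [mul_one_div]
    gcongr
  have hfin : ((∫ x, h x ∂μ - ∫ x, h x ∂ν : ℝ) : ℂ) =
      (((∫ x, h x ∂μ : ℝ) : ℂ) - ∑ m ∈ fbox d N, (c m : ℂ) * a m * charFun μ (fun i => π * m i))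
      - (((∫ x, h x ∂ν : ℝ) : ℂ) - ∑ m ∈ fbox d N, (c m : ℂ) * a m * charFun ν (fun i => π * m i))
      + ∑ m ∈ fbox d N, (c m : ℂ) * a m * u m := by
    simp only [hu, mul_sub, Finset.sum_sub_distrib]
    push_cast
    ring
  have hn : ‖((∫ x, h x ∂μ - ∫ x, h x ∂ν : ℝ) : ℂ)‖ ≤ ε + ε + √d / π * √(∑ m ∈ (fbox d N).erase 0, ‖u m‖ ^ 2 / qf m) := by
    rw [hfin]
    refine (norm_add_le _ _).trans (add_le_add ?_ hsum)
    exact (norm_sub_le _ _).trans (add_le_add k1 k2)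
  rw [Complex.norm_real] at hn
  have hεε : ε + ε = π * √d / N := by rw [hε]; field_simp; ring
  rw [hεε] at hn
  exact (le_abs_self _).trans hn

lemma charFun_sm {d : ℕ} {Ω : Type*} [MeasurableSpace Ω] (μ : Ω → Measure (Fin d → ℝ))
    (hμmeas : Measurable μ) (ξ : Fin d → ℝ) :
    StronglyMeasurable fun ω => _root_.charFun (μ ω) ξ := by
  let k : ProbabilityTheory.Kernel Ω (Fin d → ℝ) := ⟨μ, hμmeas⟩
  have hf : StronglyMeasurable fun x : Fin d → ℝ => Complex.exp (Complex.I * ∑ i, (ξ i : ℂ) * (x i : ℂ)) :=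
    Continuous.stronglyMeasurable (by fun_prop)
  exact StronglyMeasurable.integral_kernel (κ := k) hf

lemma charFun_bd {d : ℕ} (μ : Measure (Fin d → ℝ)) [IsProbabilityMeasure μ] (ξ : Fin d → ℝ) :
    ‖_root_.charFun μ ξ‖ ≤ 1 := by
  unfold _root_.charFun
  refine (norm_integral_le_of_norm_le_const (C := 1) (Filter.Eventually.of_forall fun x => ?_)).trans ?_
  · rw [Complex.norm_exp]
    simp [← Complex.ofReal_mul, ← Complex.ofReal_sum]
  · simp

lemma expect_bound {d : ℕ} (hd : 0 < d)
    (Ω : Type*) [MeasurableSpace Ω] (P : Measure Ω) [IsProbabilityMeasure P]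
    (μ ν : Ω → Measure (Fin d → ℝ))
    (hμmeas : Measurable μ) (hνmeas : Measurable ν)
    (hμprob : ∀ ω, IsProbabilityMeasure (μ ω)) (hνprob : ∀ ω, IsProbabilityMeasure (ν ω))
    (hμsupp : ∀ ω, μ ω {x | ¬ ∀ i, x i ∈ Set.Icc (0 : ℝ) 1} = 0)
    (hνsupp : ∀ ω, ν ω {x | ¬ ∀ i, x i ∈ Set.Icc (0 : ℝ) 1} = 0)
    {δ : ℝ} (hδ0 : 0 < δ)
    (hclose : ∀ m : Fin d → ℤ,
      ∫ ω, ‖_root_.charFun (μ ω) (fun i => π * m i) - _root_.charFun (ν ω) (fun i => π * m i)‖ ^ 2 ∂P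
        ≤ δ ^ 2) (N : ℕ) (hN : 2 ≤ N) (S : ℝ) (hS0 : 0 < S)
    (hS : ∑ m ∈ (fbox d N).erase 0, 1 / qf m ≤ S) :
    ∫⁻ ω, W1 (μ ω) (ν ω) ∂P ≤ ENNReal.ofReal (π * √d / N + √d / π * (δ * √S)) := by
  set s := δ * √S with hs
  have hs0 : 0 < s := by positivity
  let u : (Fin d → ℤ) → Ω → ℝ := fun m ω =>
    ‖_root_.charFun (μ ω) (fun i => π * m i) - _root_.charFun (ν ω) (fun i => π * m i)‖ ^ 2
  let X : Ω → ℝ := fun ω => ∑ m ∈ (fbox d N).erase 0, u m ω / qf m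
  have hX0 : ∀ ω, 0 ≤ X ω := fun ω => Finset.sum_nonneg fun m _ => div_nonneg (sq_nonneg _) (qf_nonneg m)
  have hui : ∀ m, Integrable (u m) P := by
    intro m
    refine Integrable.of_bound (C := 4) ?_ (Filter.Eventually.of_forall fun ω => ?_)
    · exact ((((charFun_sm μ hμmeas _).sub (charFun_sm ν hνmeas _)).norm).pow 2).aestronglyMeasurable
    · have := hμprob ω
      have := hνprob ω
      have h1 := charFun_bd (μ ω) (fun i => π * m i)
      have h2 := charFun_bd (ν ω) (fun i => π * m i)
      have h3 := norm_sub_le (_root_.charFun (μ ω) (fun i => π * m i)) (_root_.charFun (ν ω) (fun i => π * m i))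
      simp only [u]
      rw [Real.norm_eq_abs, abs_of_nonneg (sq_nonneg _)]
      nlinarith [norm_nonneg (_root_.charFun (μ ω) (fun i => π * m i) - _root_.charFun (ν ω) (fun i => π * m i))]
  have hXi : Integrable X P := integrable_finsetSum _ fun m _ => (hui m).div_const _
  have hXint : ∫ ω, X ω ∂P ≤ s ^ 2 := by
    simp only [X]
    rw [integral_finsetSum _ fun m _ => (hui m).div_const _]
    have : ∀ m ∈ (fbox d N).erase 0, ∫ ω, u m ω / qf m ∂P ≤ δ ^ 2 * (1 / qf m) := by
      intro m _
      rw [integral_div, mul_one_div]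
      exact div_le_div_of_nonneg_right (hclose m) (qf_nonneg m)
    refine (Finset.sum_le_sum this).trans ?_
    rw [← Finset.mul_sum, hs, mul_pow, Real.sq_sqrt hS0.le]
    gcongr
  set A := π * √d / N
  set B := √d / π with hB
  have hB0 : 0 ≤ B := by positivity
  have hA0 : 0 ≤ A := by positivity
  let g : Ω → ℝ := fun ω => A + B * ((X ω / s + s) / 2)
  have hgi : Integrable g P := by
    refine (integrable_const _).add (Integrable.const_mul (Integrable.div_const ?_ _) _)
    exact (hXi.div_const _).add (integrable_const _)
  have hg0 : ∀ ω, 0 ≤ g ω := fun ω => by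
    have := hX0 ω
    simp only [g]
    positivity
  calc ∫⁻ ω, W1 (μ ω) (ν ω) ∂P ≤ ∫⁻ ω, ENNReal.ofReal (g ω) ∂P := by
        refine lintegral_mono fun ω => ?_
        have := hμprob ω
        have := hνprob ω
        refine (W1_le_fourier hd N hN (μ ω) (ν ω) (hμsupp ω) (hνsupp ω)).trans ?_
        refine ENNReal.ofReal_le_ofReal ?_
        simp only [g]
        refine add_le_add le_rfl (mul_le_mul_of_nonneg_left ?_ hB0)
        change √(X ω) ≤ _
        have h5 : (X ω / s + s) / 2 - √(X ω) = (√(X ω) - s) ^ 2 / (2 * s) := by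
          rw [sub_sq, Real.sq_sqrt (hX0 ω)]; field_simp; ring
        have : 0 ≤ (√(X ω) - s) ^ 2 / (2 * s) := by positivity
        linarith
    _ = ENNReal.ofReal (∫ ω, g ω ∂P) :=
        (ofReal_integral_eq_lintegral_ofReal hgi (Filter.Eventually.of_forall hg0)).symm
    _ ≤ ENNReal.ofReal (A + B * s) := by
        refine ENNReal.ofReal_le_ofReal ?_
        have e : ∫ ω, g ω ∂P = A + B * (((∫ ω, X ω ∂P) / s + s) / 2) := by
          have hi : Integrable (fun ω => X ω / s + s) P := (hXi.div_const _).add (integrable_const _)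
          simp only [g]
          rw [integral_add (integrable_const _) (Integrable.const_mul (Integrable.div_const
            hi _) _), integral_const, integral_const_mul, integral_div,
            integral_add (hXi.div_const _) (integrable_const _), integral_div]
          simp
        rw [e]
        refine add_le_add le_rfl (mul_le_mul_of_nonneg_left ?_ hB0)
        have : (∫ ω, X ω ∂P) / s ≤ s := by
          rw [div_le_iff₀ hs0, ← sq]; exact hXint
        linarith

lemma shell_bound {d : ℕ} (n : ℕ) :
    ∑ m ∈ (fbox d (n + 2)).erase 0, 1 / qf m ≤ ∑ k ∈ Finset.Icc 1 n, 2 * d * (2 * k + 1 : ℝ) ^ (d - 1) / (k : ℝ) ^ 2 := by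
  classical
  let Q : Fin d → ℕ → Finset (Fin d → ℤ) := fun i k =>
    Fintype.piFinset fun j => if j = i then {(k:ℤ), -(k:ℤ)} else Finset.Icc (-(k:ℤ)) k
  have hQ : ∀ i k, ((Q i k).card : ℝ) ≤ 2 * (2 * k + 1 : ℝ) ^ (d - 1) := by
    intro i k
    have : (Q i k).card ≤ 2 * (2 * k + 1) ^ (d - 1) := by
      simp only [Q]
      rw [Fintype.card_piFinset, ← Finset.mul_prod_erase Finset.univ _ (Finset.mem_univ i)]
      refine Nat.mul_le_mul ?_ ?_
      · simp only [if_true]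
        exact Finset.card_le_two
      · refine (Finset.prod_le_pow_card _ _ (2 * k + 1) fun j hj => ?_).trans (le_of_eq ?_)
        · rw [if_neg (Finset.ne_of_mem_erase hj), Int.card_Icc]
          omega
        · rw [Finset.card_erase_of_mem (Finset.mem_univ _)]
          simp
    exact_mod_cast this
  have h1 : ∀ m ∈ (fbox d (n + 2)).erase 0, 1 / qf m ≤
      ∑ i : Fin d, ∑ k ∈ Finset.Icc 1 n, if m ∈ Q i k then 1 / (k:ℝ) ^ 2 else 0 := by
    intro m hm
    rw [Finset.mem_erase] at hm
    obtain ⟨hm0, hmb⟩ := hm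
    obtain ⟨i0, hi0⟩ := Function.ne_iff.mp hm0
    obtain ⟨i, -, hi⟩ := Finset.exists_max_image Finset.univ (fun i => (m i).natAbs) ⟨i0, Finset.mem_univ _⟩
    have hb : ∀ j, -(n:ℤ) ≤ m j ∧ m j ≤ n := by
      intro j
      have := (Fintype.mem_piFinset.mp hmb) j
      rw [Finset.mem_Icc] at this
      push_cast at this
      omega
    set k := (m i).natAbs with hk
    have hk1 : k ∈ Finset.Icc 1 n := by
      rw [Finset.mem_Icc]
      have := hi i0 (Finset.mem_univ _)
      have := hb i
      simp only [Pi.zero_apply] at hi0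
      omega
    have hmQ : m ∈ Q i k := by
      simp only [Q, Fintype.mem_piFinset]
      intro j
      split_ifs with hj
      · subst hj
        simp only [Finset.mem_insert, Finset.mem_singleton]
        omega
      · rw [Finset.mem_Icc]
        have := hi j (Finset.mem_univ _)
        omega
    have hk0 : (0:ℝ) < k := by
      have := (Finset.mem_Icc.mp hk1).1
      exact_mod_cast this
    have h2 : 1 / qf m ≤ 1 / (k:ℝ) ^ 2 := by
      refine one_div_le_one_div_of_le (by positivity) ?_
      have e : (k:ℝ) ^ 2 = (m i : ℝ) ^ 2 := by
        have := Int.natAbs_sq (m i)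
        rw [← hk] at this
        exact_mod_cast this
      rw [e]
      exact Finset.single_le_sum (f := fun i => (m i : ℝ) ^ 2) (fun _ _ => sq_nonneg _) (Finset.mem_univ i)
    refine h2.trans ?_
    have hnn : ∀ (i : Fin d) (k : ℕ), 0 ≤ (if m ∈ Q i k then 1 / (k:ℝ) ^ 2 else 0) := by
      intro i k
      split_ifs <;> positivity
    refine le_trans ?_ (Finset.single_le_sum (f := fun i => ∑ k ∈ Finset.Icc 1 n, if m ∈ Q i k then 1 / (k:ℝ) ^ 2 else 0)
      (fun i _ => Finset.sum_nonneg fun k _ => hnn i k) (Finset.mem_univ i))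
    refine le_trans ?_ (Finset.single_le_sum (f := fun k : ℕ => if m ∈ Q i k then 1 / (k:ℝ) ^ 2 else 0)
      (fun k _ => hnn i k) hk1)
    simp only [if_pos hmQ]
    exact le_rfl
  refine (Finset.sum_le_sum h1).trans ?_
  rw [Finset.sum_comm]
  have h3 : ∀ i ∈ (Finset.univ : Finset (Fin d)), ∑ m ∈ (fbox d (n + 2)).erase 0, ∑ k ∈ Finset.Icc 1 n, (if m ∈ Q i k then 1 / (k:ℝ) ^ 2 else 0)
      ≤ ∑ k ∈ Finset.Icc 1 n, 2 * (2 * k + 1 : ℝ) ^ (d - 1) / (k : ℝ) ^ 2 := by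
    intro i _
    rw [Finset.sum_comm]
    refine Finset.sum_le_sum fun k _ => ?_
    rw [← Finset.sum_filter, Finset.sum_const, nsmul_eq_mul, mul_one_div]
    refine div_le_div_of_nonneg_right ?_ (by positivity)
    refine le_trans ?_ (hQ i k)
    exact_mod_cast Finset.card_le_card (fun m hm => (Finset.mem_filter.mp hm).2)
  refine (Finset.sum_le_sum h3).trans (le_of_eq ?_)
  rw [Finset.sum_const, Finset.card_univ, Fintype.card_fin, nsmul_eq_mul, Finset.mul_sum]
  refine Finset.sum_congr rfl fun k _ => ?_
  ring

lemma sum_inv_sq_le (n : ℕ) : ∑ k ∈ Finset.Icc 1 n, 1 / (k:ℝ) ^ 2 ≤ 2 := by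
  have h : ∀ n : ℕ, ∑ k ∈ Finset.Icc 1 (n + 1), 1 / (k:ℝ) ^ 2 ≤ 2 - 1 / ((n:ℝ) + 1) := by
    intro n
    induction n with
    | zero => norm_num
    | succ n ih =>
      rw [Finset.sum_Icc_succ_top (by omega)]
      have e : 1 / ((n:ℝ) + 1) - 1 / (n + 1 + 1) - 1 / (n + 1 + 1) ^ 2 = 1 / ((n + 1) * (n + 1 + 1) ^ 2) := by
        field_simp; ring
      have : 0 ≤ 1 / (((n:ℝ) + 1) * (n + 1 + 1) ^ 2) := by positivity
      push_cast
      linarith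
  cases n with
  | zero => simp
  | succ n =>
    have := h n
    have h2 : 0 ≤ 1 / ((n:ℝ) + 1) := by positivity
    linarith

lemma shell1 (n : ℕ) : ∑ m ∈ (fbox 1 (n + 2)).erase 0, 1 / qf m ≤ 4 := by
  refine (shell_bound n).trans ?_
  have e : ∀ k ∈ Finset.Icc 1 n, 2 * ((1:ℕ):ℝ) * (2 * k + 1 : ℝ) ^ (1 - 1) / (k : ℝ) ^ 2 = 2 * (1 / (k:ℝ) ^ 2) := by
    intro k _
    simp
    ring
  rw [Finset.sum_congr rfl e, ← Finset.mul_sum]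
  linarith [sum_inv_sq_le n]

lemma shell2 (n : ℕ) : ∑ m ∈ (fbox 2 (n + 2)).erase 0, 1 / qf m ≤ 12 * (1 + Real.log n) := by
  refine (shell_bound n).trans ?_
  have e : ∀ k ∈ Finset.Icc 1 n, 2 * ((2:ℕ):ℝ) * (2 * k + 1 : ℝ) ^ (2 - 1) / (k : ℝ) ^ 2 ≤ 12 * (k:ℝ)⁻¹ := by
    intro k hk
    have hk1 : (1:ℝ) ≤ k := by exact_mod_cast (Finset.mem_Icc.mp hk).1
    rw [div_le_iff₀ (by positivity)]
    have : 12 * (k:ℝ)⁻¹ * k ^ 2 = 12 * k := by field_simp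
    rw [this]
    norm_num
    linarith
  refine (Finset.sum_le_sum e).trans ?_
  rw [← Finset.mul_sum]
  have h := harmonic_le_one_add_log n
  rw [harmonic_eq_sum_Icc] at h
  push_cast at h
  linarith

lemma shell3 (e n : ℕ) : ∑ m ∈ (fbox (e + 3) (n + 2)).erase 0, 1 / qf m
    ≤ if n = 0 then 0 else 9 * (e + 3) * (2 * n + 1 : ℝ) ^ (e + 1) := by
  refine (shell_bound n).trans ?_
  split_ifs with hn
  · subst hn; simp
  have h : ∀ k ∈ Finset.Icc 1 n, 2 * ((e + 3 : ℕ):ℝ) * (2 * k + 1 : ℝ) ^ (e + 3 - 1) / (k : ℝ) ^ 2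
      ≤ 18 * (e + 3) * (2 * n + 1 : ℝ) ^ e := by
    intro k hk
    have hk1 : (1:ℝ) ≤ k := by exact_mod_cast (Finset.mem_Icc.mp hk).1
    have hkn : (k:ℝ) ≤ n := by exact_mod_cast (Finset.mem_Icc.mp hk).2
    rw [div_le_iff₀ (by positivity)]
    have e1 : e + 3 - 1 = e + 2 := by omega
    rw [e1, pow_add]
    push_cast
    have h1 : (2 * k + 1 : ℝ) ^ e ≤ (2 * n + 1 : ℝ) ^ e := by gcongr
    have h2 : (2 * k + 1 : ℝ) ^ 2 ≤ 9 * k ^ 2 := by nlinarith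
    calc 2 * ((e:ℝ) + 3) * ((2 * k + 1 : ℝ) ^ e * (2 * k + 1 : ℝ) ^ 2)
        ≤ 2 * ((e:ℝ) + 3) * ((2 * n + 1 : ℝ) ^ e * (9 * k ^ 2)) := by gcongr
      _ = _ := by ring
  refine (Finset.sum_le_sum h).trans ?_
  rw [Finset.sum_const, Nat.card_Icc, nsmul_eq_mul, pow_succ]
  have : 0 ≤ ((e:ℝ) + 3) * (2 * n + 1 : ℝ) ^ e := by positivity
  simp only [add_tsub_cancel_right]
  nlinarith

lemma geo_bound (e : ℕ) : ((e:ℝ) + 3) * (0.8:ℝ) ^ (e + 1) ≤ 2.56 := by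
  cases e with
  | zero => norm_num
  | succ e =>
    induction e with
    | zero => norm_num
    | succ e ih =>
      rw [pow_succ]
      push_cast at ih ⊢
      have : 0 ≤ (0.8:ℝ) ^ (e + 1 + 1) := by positivity
      have he : (0:ℝ) ≤ e := by positivity
      nlinarith [mul_nonneg he this]

/-- Proposition 6: quantitative bounds on the expected Kantorovich distance between
two random probability measures on `[0,1]^d` whose characteristic functions are
close on the lattice `πℤ^d` in mean square. -/
theorem expected_W1_of_charFun_close {d : ℕ}
    (Ω : Type*) [MeasurableSpace Ω] (P : Measure Ω) [IsProbabilityMeasure P]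
    (μ ν : Ω → Measure (Fin d → ℝ))
    (hμmeas : Measurable μ) (hνmeas : Measurable ν)
    (hμprob : ∀ ω, IsProbabilityMeasure (μ ω)) (hνprob : ∀ ω, IsProbabilityMeasure (ν ω))
    (hμsupp : ∀ ω, μ ω {x | ¬ ∀ i, x i ∈ Set.Icc (0 : ℝ) 1} = 0)
    (hνsupp : ∀ ω, ν ω {x | ¬ ∀ i, x i ∈ Set.Icc (0 : ℝ) 1} = 0)
    {δ : ℝ} (hδ0 : 0 < δ) (hδ2 : δ ≤ 2)
    (hclose : ∀ m : Fin d → ℤ,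
      ∫ ω, ‖charFun (μ ω) (fun i => π * m i) - charFun (ν ω) (fun i => π * m i)‖ ^ 2 ∂P
        ≤ δ ^ 2) :
    (d = 1 → ∫⁻ ω, W1 (μ ω) (ν ω) ∂P ≤ ENNReal.ofReal δ) ∧
    (d = 2 → ∫⁻ ω, W1 (μ ω) (ν ω) ∂P
        ≤ ENNReal.ofReal (5 * δ * Real.sqrt (1 + Real.log (4 / δ ^ 2)))) ∧
    (3 ≤ d → ∫⁻ ω, W1 (μ ω) (ν ω) ∂P
        ≤ ENNReal.ofReal (10 * Real.sqrt d * δ ^ (2 / d : ℝ))) := by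
  have hπ3 := Real.pi_gt_d4
  have hπ4 := Real.pi_lt_d4
  have main := fun (hd : 0 < d) (n : ℕ) (S : ℝ) (hS0 : 0 < S) hS =>
    expect_bound hd Ω P μ ν hμmeas hνmeas hμprob hνprob hμsupp hνsupp hδ0 hclose (n + 2) (by omega) S hS0 hS
  refine ⟨?_, ?_, ?_⟩
  · rintro rfl
    refine (main one_pos ⌈10 / δ⌉₊ 4 (by norm_num) (shell1 _)).trans (ENNReal.ofReal_le_ofReal ?_)
    have h1 : 10 / δ ≤ ((⌈10 / δ⌉₊ + 2 : ℕ) : ℝ) := by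
      push_cast
      linarith [Nat.le_ceil (10 / δ)]
    have h4 : √(4:ℝ) = 2 := by
      rw [show (4:ℝ) = 2 ^ 2 by norm_num, Real.sqrt_sq (by norm_num)]
    rw [h4, Nat.cast_one, Real.sqrt_one, mul_one]
    have h2 : π / ((⌈10 / δ⌉₊ + 2 : ℕ) : ℝ) ≤ π / (10 / δ) := by gcongr
    have h3 : π / (10 / δ) ≤ 0.32 * δ := by
      rw [div_div_eq_mul_div]; nlinarith
    have h5 : 1 / π * (δ * 2) ≤ 0.65 * δ := by
      rw [one_div_mul_eq_div, div_le_iff₀ (by positivity)]; nlinarith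
    linarith
  · rintro rfl
    have hx1 : 1 ≤ 2 / δ := by rw [le_div_iff₀ hδ0]; linarith
    set n := ⌊2 / δ⌋₊ with hn
    have hn1 : 1 ≤ n := Nat.le_floor (by simpa using hx1)
    have hnle : (n:ℝ) ≤ 2 / δ := Nat.floor_le (by positivity)
    have hngt : 2 / δ < n + 1 := Nat.lt_floor_add_one _
    set L := 1 + Real.log (4 / δ ^ 2) with hLdef
    have hlog : Real.log (4 / δ ^ 2) = 2 * Real.log (2 / δ) := by
      rw [show 4 / δ ^ 2 = (2 / δ) ^ 2 by rw [div_pow]; norm_num, Real.log_pow]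
      norm_num
    have hlog0 : 0 ≤ Real.log (2 / δ) := Real.log_nonneg hx1
    have hlogn : Real.log n ≤ Real.log (2 / δ) :=
      Real.log_le_log (by exact_mod_cast hn1) hnle
    have hL1 : 1 ≤ L := by rw [hLdef, hlog]; linarith
    refine (main two_pos n (12 * L) (by positivity) ((shell2 n).trans ?_)).trans (ENNReal.ofReal_le_ofReal ?_)
    · rw [hLdef, hlog]; linarith
    have hsL : 1 ≤ √L := Real.one_le_sqrt.mpr hL1
    have hs2 : √((2:ℕ):ℝ) ≤ 1.42 := by
      rw [Real.sqrt_le_left (by norm_num)]; norm_num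
    have hs12 : √(12 * L) ≤ 3.5 * √L := by
      rw [Real.sqrt_mul (by norm_num)]
      gcongr
      rw [Real.sqrt_le_left (by norm_num)]; norm_num
    have h1 : π * √((2:ℕ):ℝ) / ((n + 2 : ℕ) : ℝ) ≤ π * 1.42 / (2 / δ) := by
      gcongr
      push_cast; linarith
    have h2 : π * 1.42 / (2 / δ) ≤ 2.3 * δ := by
      rw [div_div_eq_mul_div]; nlinarith
    have h3 : √((2:ℕ):ℝ) / π * (δ * √(12 * L)) ≤ 1.42 / 3 * (δ * (3.5 * √L)) := by
      gcongr
      linarith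
    have h4 : 2.3 * δ ≤ 2.3 * δ * √L := le_mul_of_one_le_right (by positivity) hsL
    have h5 : 0 ≤ δ * √L := by positivity
    nlinarith
  · intro hd
    obtain ⟨e, rfl⟩ := Nat.exists_eq_add_of_le' hd
    set r : ℝ := δ ^ (2 / (e + 3 : ℕ) : ℝ) with hr
    have hr0 : 0 < r := Real.rpow_pos_of_pos hδ0 _
    have hrd : r ^ (e + 3) = δ ^ 2 := by
      rw [hr, ← Real.rpow_natCast, ← Real.rpow_mul hδ0.le, div_mul_cancel₀ _ (by positivity)]
      norm_num
    set n := ⌈0.4 / r⌉₊ - 2 with hn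
    have hN : 0.4 / r ≤ ((n + 2 : ℕ) : ℝ) := by
      refine (Nat.le_ceil _).trans ?_
      exact_mod_cast (by omega)
    set S : ℝ := 9 * (e + 3) * (0.8 / r) ^ (e + 1) with hS
    have hS0 : 0 < S := by positivity
    refine (main (by omega) n S hS0 ((shell3 e n).trans ?_)).trans (ENNReal.ofReal_le_ofReal ?_)
    · split_ifs with h0
      · exact hS0.le
      · have h1 : ((n + 2 : ℕ) : ℝ) < 0.4 / r + 1 := by
          have : n + 2 = ⌈0.4 / r⌉₊ := by omega
          rw [this]
          exact Nat.ceil_lt_add_one (by positivity)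
        have h2 : (2 * n + 1 : ℝ) ≤ 0.8 / r := by
          have : 0.8 / r = 2 * (0.4 / r) := by ring
          push_cast at h1
          linarith
        rw [hS]
        gcongr
    have hdS : δ * √S ≤ 4.8 * r := by
      have h1 : δ * √S = √(δ ^ 2 * S) := by
        rw [Real.sqrt_mul (x := δ ^ 2) (by positivity) S, Real.sqrt_sq hδ0.le]
      rw [h1, Real.sqrt_le_left (by positivity), ← hrd, hS]
      have h2 : r ^ (e + 3) * (9 * (e + 3) * (0.8 / r) ^ (e + 1)) = 9 * r ^ 2 * ((e + 3) * 0.8 ^ (e + 1)) := by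
        rw [div_pow, show e + 3 = (e + 1) + 2 by ring, pow_add r]
        field_simp
      rw [h2]
      have := geo_bound e
      nlinarith [sq_nonneg r]
    set D := √((e + 3 : ℕ) : ℝ)
    have hD : 0 ≤ D := Real.sqrt_nonneg _
    have h1 : π * D / ((n + 2 : ℕ) : ℝ) ≤ 3.1416 * D / (0.4 / r) := by
      gcongr
    have h2 : D / π * (δ * √S) ≤ D / 3.1415 * (4.8 * r) := by
      gcongr
    have h3 : 3.1416 * D / (0.4 / r) = 7.854 * (D * r) := by
      field_simp; ring
    have h4 : 0 ≤ D * r := by positivity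
    have h5 : D / 3.1415 * (4.8 * r) ≤ 2 * (D * r) := by
      have : D / 3.1415 * (4.8 * r) = 4.8 / 3.1415 * (D * r) := by ring
      rw [this]
      exact mul_le_mul_of_nonneg_right (by norm_num) h4
    have h6 : 10 * D * r = 10 * (D * r) := by ring
    rw [h6]
    linarith
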